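/- Let q = 2^h, let q/2 ≤ k ≤ q-1, and let R be a subset of {e ∈ F_q : tr_{q→2}(e) = 1} of size q-k-1. Define g(X) = tr_{q→2}(X)·∏_{e ∈ R}(X^q + X + e) ∈ F_{q^2}[X]. Then the function x ↦ g(x) + g(x)^q has exactly q(q-k-1) + q^2/2 distinct zeros in F_{q^2}. -/

import Mathlib

/-!
Suppose `q = r ^ h` and `|F| = q ^ m`. The maps `L x = ∑ j < m, x ^ q ^ j` and
`T x = ∑ i < h, x ^ r ^ i` commute, and `T ∘ L` is the trace of `F` over its subfield of order
`r`. The product `P x = ∏ e ∈ R, (L x - e)` takes its values in the subfield of order `q`, over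
which `L` is linear, so `L (T x * P x) = P x * T (L x)`. This vanishes when `L x ∈ R` or when
`T (L x) = 0`, and these exclude each other because `T` has no zero in `R`.

Both conditions are counted from the fact that a trace to the subfield of order `r` is balanced:
its fibres have at most `r ^ (n - 1)` elements by degree, and at most `r` of them are nonempty;
as the fibres exhaust a field of order `r ^ n`, these bounds are equalities.
-/

open Finset

section FrobTrace

variable {A : Type*} [CommSemiring A] {r n : ℕ}

/-- The polynomial function `∑ j < n, X ^ r ^ j`. On a field of order `r ^ n` it is the trace
to the subfield of order `r`; it is defined on any semiring because it is also evaluated outside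
that field, as `tr_{q→2}` is on `𝔽_{q²}`. -/
def frobTrace (r n : ℕ) (x : A) : A := ∑ j ∈ range n, x ^ r ^ j

lemma map_frobTrace {B : Type*} [CommSemiring B] (φ : A →+* B) (x : A) :
    φ (frobTrace r n x) = frobTrace r n (φ x) := by
  simp only [frobTrace, map_sum, map_pow]

lemma frobTrace_mul_left_of_pow_eq_self {c : A} (hc : c ^ r = c) (x : A) :
    frobTrace r n (c * x) = c * frobTrace r n x := by
  have hcj (j : ℕ) : c ^ r ^ j = c := by
    induction j with
    | zero => rw [pow_zero, pow_one]
    | succ j ih => rw [pow_succ, pow_mul, ih, hc]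
  simp only [frobTrace, mul_pow, hcj, mul_sum]

lemma frobTrace_pow_of_pow_eq_self {x : A} (hx : x ^ r ^ n = x) :
    frobTrace r n (x ^ r) = frobTrace r n x := by
  obtain _ | n := n
  · rfl
  · simp only [frobTrace, ← pow_mul, ← pow_succ']
    rw [sum_range_succ, hx, sum_range_succ', pow_zero, pow_one]

lemma frobTrace_mul_eq_sum (h m : ℕ) (x : A) :
    frobTrace r (h * m) x = ∑ j ∈ range m, frobTrace r h (x ^ (r ^ h) ^ j) := by
  induction m with
  | zero => rfl
  | succ m ih =>
    rw [sum_range_succ, ← ih, mul_add_one]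
    simp only [frobTrace, sum_range_add, pow_add, pow_mul]

end FrobTrace

section RootCounting

open Polynomial

variable {F : Type*} [Field F] [Fintype F] [DecidableEq F] {r : ℕ}

lemma card_filter_eval_eq_zero_le_natDegree {A : Type*} [CommRing A] [IsDomain A] [Fintype A]
    [DecidableEq A] {p : A[X]} (hp : p ≠ 0) : #{x | p.eval x = 0} ≤ p.natDegree :=
  card_le_degree_of_subset_roots fun _ hx ↦ (mem_roots hp).2 (mem_filter.1 hx).2

lemma card_filter_pow_eq_self_le (hr : 1 < r) : #{x : F | x ^ r = x} ≤ r := by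
  simpa [sub_eq_zero, FiniteField.X_pow_card_sub_X_natDegree_eq F hr] using
    card_filter_eval_eq_zero_le_natDegree (FiniteField.X_pow_card_sub_X_ne_zero F hr)

lemma card_filter_frobTrace_succ_eq_le (hr : 1 < r) (n : ℕ) (y : F) :
    #{x | frobTrace r (n + 1) x = y} ≤ r ^ n := by
  set s : F[X] := ∑ j ∈ range n, X ^ r ^ j - C y with hs
  have hdeg : s.degree < ↑(r ^ n) := by
    refine mem_degreeLT.1 (sub_mem (sum_mem fun j hj ↦ ?_) ?_) <;> rw [mem_degreeLT]
    · rw [degree_X_pow]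
      exact_mod_cast Nat.pow_lt_pow_right hr (mem_range.1 hj)
    · exact degree_C_le.trans_lt (by exact_mod_cast Nat.pow_pos (zero_lt_one.trans hr))
  have heval (x : F) : (X ^ r ^ n + s).eval x = frobTrace r (n + 1) x - y := by
    simp only [frobTrace, hs, sum_range_succ, eval_add, eval_sub, eval_pow, eval_X, eval_C,
      eval_finsetSum]
    ring
  have hroots := card_filter_eval_eq_zero_le_natDegree (monic_X_pow_add hdeg).ne_zero
  simp only [heval, sub_eq_zero] at hroots
  rwa [natDegree_add_eq_left_of_degree_lt (by rwa [degree_X_pow]), natDegree_X_pow] at hroots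

end RootCounting

section FiniteField

variable {F : Type*} [Field F] [Fintype F] {r n : ℕ}

lemma exponent_ne_zero_of_card_eq_pow (hF : Fintype.card F = r ^ n) : n ≠ 0 := by
  rintro rfl
  exact Fintype.one_lt_card.ne' hF

lemma one_lt_of_card_eq_pow (hF : Fintype.card F = r ^ n) : 1 < r :=
  (one_lt_pow_iff (exponent_ne_zero_of_card_eq_pow hF)).1 (hF ▸ Fintype.one_lt_card)

lemma exists_ringHom_eq_pow_pow (hF : Fintype.card F = r ^ n) (j : ℕ) :
    ∃ φ : F →+* F, ∀ x, φ x = x ^ r ^ j := by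
  obtain ⟨p, _, k, hp, hcard⟩ := FiniteField.card' F
  have : Fact p.Prime := ⟨hp⟩
  have hdvd : r ∣ p ^ (k : ℕ) :=
    hcard ▸ hF ▸ dvd_pow_self r (exponent_ne_zero_of_card_eq_pow hF)
  obtain ⟨a, -, rfl⟩ := (Nat.dvd_prime_pow hp).1 hdvd
  exact ⟨iterateFrobenius F p (a * j), fun x ↦ by rw [iterateFrobenius_def, pow_mul]⟩

lemma frobTrace_sum (hF : Fintype.card F = r ^ n) {ι : Type*} (l : ℕ) (s : Finset ι)
    (f : ι → F) : frobTrace r l (∑ i ∈ s, f i) = ∑ i ∈ s, frobTrace r l (f i) := by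
  simp only [frobTrace]
  rw [sum_comm]
  refine sum_congr rfl fun j _ ↦ ?_
  obtain ⟨φ, hφ⟩ := exists_ringHom_eq_pow_pow hF j
  simp only [← hφ, map_sum]

lemma frobTrace_frobTrace {h m : ℕ} (hF : Fintype.card F = r ^ n) (x : F) :
    frobTrace r h (frobTrace (r ^ h) m x) = frobTrace r (h * m) x := by
  rw [frobTrace_mul_eq_sum, ← frobTrace_sum hF, frobTrace.eq_def (r ^ h)]

lemma frobTrace_comm {s k : ℕ} (hr : Fintype.card F = r ^ n) (hs : Fintype.card F = s ^ k)
    (a b : ℕ) (x : F) :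
    frobTrace r a (frobTrace s b x) = frobTrace s b (frobTrace r a x) := by
  rw [frobTrace.eq_def s, frobTrace_sum hr, frobTrace.eq_def s]
  refine sum_congr rfl fun j _ ↦ ?_
  obtain ⟨φ, hφ⟩ := exists_ringHom_eq_pow_pow hs j
  rw [← hφ, ← hφ, map_frobTrace]

lemma frobTrace_pow_eq_self (hF : Fintype.card F = r ^ n) (x : F) :
    frobTrace r n x ^ r = frobTrace r n x := by
  obtain ⟨φ, hφ⟩ := exists_ringHom_eq_pow_pow hF 1
  simp only [pow_one] at hφ
  rw [← hφ, map_frobTrace, hφ, frobTrace_pow_of_pow_eq_self (hF ▸ FiniteField.pow_card x)]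

lemma prod_frobTrace_sub_pow_eq_self (hF : Fintype.card F = r ^ n) {R : Finset F}
    (hR : ∀ e ∈ R, e ^ r = e) (x : F) :
    (∏ e ∈ R, (frobTrace r n x - e)) ^ r = ∏ e ∈ R, (frobTrace r n x - e) := by
  obtain ⟨φ, hφ⟩ := exists_ringHom_eq_pow_pow hF 1
  simp only [pow_one] at hφ
  rw [← hφ, map_prod]
  exact prod_congr rfl fun e he ↦ by rw [map_sub, hφ, hφ, frobTrace_pow_eq_self hF, hR e he]

lemma frobTrace_mul_prod_eq_zero_iff {q k a : ℕ} (hr : Fintype.card F = r ^ k)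
    (hq : Fintype.card F = q ^ n) {R : Finset F} (hR : ∀ e ∈ R, e ^ q = e) (x : F) :
    frobTrace q n (frobTrace r a x * ∏ e ∈ R, (frobTrace q n x - e)) = 0 ↔
      frobTrace q n x ∈ R ∨ frobTrace r a (frobTrace q n x) = 0 := by
  rw [mul_comm, frobTrace_mul_left_of_pow_eq_self (prod_frobTrace_sub_pow_eq_self hq hR x),
    frobTrace_comm hq hr, mul_eq_zero, prod_eq_zero_iff]
  simp only [sub_eq_zero, exists_eq_right']

variable [DecidableEq F]

lemma card_filter_frobTrace_eq (hF : Fintype.card F = r ^ n) {y : F} (hy : y ^ r = y) :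
    #{x | frobTrace r n x = y} = r ^ (n - 1) := by
  obtain ⟨n, rfl⟩ := Nat.exists_eq_succ_of_ne_zero (exponent_ne_zero_of_card_eq_pow hF)
  have hr := one_lt_of_card_eq_pow hF
  set S : Finset F := {z | z ^ r = z} with hS
  have hfib : ∀ z ∈ S, #{x | frobTrace r (n + 1) x = z} ≤ r ^ n :=
    fun z _ ↦ card_filter_frobTrace_succ_eq_le hr n z
  have hsum : ∑ _ ∈ S, r ^ n ≤ ∑ z ∈ S, #{x | frobTrace r (n + 1) x = z} :=
    calc
      ∑ _ ∈ S, r ^ n = #S * r ^ n := by rw [sum_const, smul_eq_mul]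
      _ ≤ r * r ^ n := Nat.mul_le_mul_right _ (card_filter_pow_eq_self_le hr)
      _ = #(univ : Finset F) := by rw [card_univ, hF, pow_succ']
      _ = ∑ z ∈ S, #{x | frobTrace r (n + 1) x = z} :=
        card_eq_sum_card_fiberwise fun x _ ↦ by simpa [hS] using frobTrace_pow_eq_self hF x
  exact (sum_eq_sum_iff_of_le hfib).1 ((sum_le_sum hfib).antisymm hsum) y (by simpa [hS] using hy)

lemma card_filter_frobTrace_mem (hF : Fintype.card F = r ^ n) {R : Finset F}
    (hR : ∀ e ∈ R, e ^ r = e) : #{x | frobTrace r n x ∈ R} = r ^ (n - 1) * #R := by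
  rw [← sum_card_fiberwise_eq_card_filter,
    sum_const_nat fun e he ↦ card_filter_frobTrace_eq hF (hR e he), mul_comm]

lemma card_filter_frobTrace_eq_zero (hF : Fintype.card F = r ^ n) :
    #{x : F | frobTrace r n x = 0} = r ^ n / r := by
  have hr := zero_lt_one.trans (one_lt_of_card_eq_pow hF)
  rw [card_filter_frobTrace_eq hF (zero_pow hr.ne'),
    Nat.pow_sub_one hr.ne' (exponent_ne_zero_of_card_eq_pow hF)]

end FiniteField

theorem zeros_count_q_even_general {F : Type*} [Field F] [Fintype F] {q r h m : ℕ}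
    (hq : q = r ^ h) (hF : Fintype.card F = q ^ m) (R : Finset F)
    (hR : ∀ e ∈ R, e ^ q = e ∧ frobTrace r h e ≠ 0) :
    {x : F | frobTrace q m (frobTrace r h x * ∏ e ∈ R, (frobTrace q m x - e)) = 0}.ncard =
      q ^ (m - 1) * #R + q ^ m / r := by
  classical
  have hFr : Fintype.card F = r ^ (h * m) := by rw [hF, hq, pow_mul]
  have hRq : ∀ e ∈ R, e ^ q = e := fun e he ↦ (hR e he).1
  have htrans (x : F) : frobTrace r h (frobTrace q m x) = frobTrace r (h * m) x :=
    hq ▸ frobTrace_frobTrace hFr x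
  have hdisj : Disjoint ({x | frobTrace q m x ∈ R} : Finset F)
      ({x | frobTrace r (h * m) x = 0} : Finset F) :=
    disjoint_filter.2 fun x _ hx ↦ htrans x ▸ (hR _ hx).2
  simp only [frobTrace_mul_prod_eq_zero_iff hFr hF hRq, htrans]
  rw [Set.ncard_eq_toFinset_card', Set.toFinset_ofPred, filter_or, card_union_of_disjoint hdisj,
    card_filter_frobTrace_mem hF hRq, card_filter_frobTrace_eq_zero hFr, ← hFr, hF]

/-- Let `q = 2^h`, let `q/2 ≤ k ≤ q-1`, and let `R` be a subset of
`{e ∈ 𝔽_q : tr_{q→2}(e) = 1}` of size `q - k - 1`, where `tr_{q→2}(X) = ∑_{j=0}^{h-1} X^(2^j)`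
is the trace from `𝔽_q` to `𝔽_2`.  Define `g(X) = tr_{q→2}(X)·∏_{e ∈ R}(X^q + X + e)`.
Then the function `x ↦ g(x) + g(x)^q` has exactly `q(q-k-1) + q²/2` distinct zeros in
`𝔽_{q²}`. -/
theorem zeros_count_q_even
    (q h k : ℕ) (hh : 1 ≤ h) (hq : q = 2 ^ h) (hk1 : q ≤ 2 * k) (hk2 : k ≤ q - 1)
    (F : Type) [Field F] [Fintype F] (hF : Fintype.card F = q ^ 2)
    (R : Finset F) (hRcard : R.card = q - k - 1)
    (hR : ∀ e ∈ R, e ^ q = e ∧ ∑ j ∈ Finset.range h, e ^ (2 ^ j) = 1) :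
    Set.ncard {x : F |
        (∑ j ∈ Finset.range h, x ^ (2 ^ j)) * (∏ e ∈ R, (x ^ q + x + e))
          + ((∑ j ∈ Finset.range h, x ^ (2 ^ j)) * (∏ e ∈ R, (x ^ q + x + e))) ^ q = 0}
      = q * (q - k - 1) + q ^ 2 / 2 := by
  have : CharP F 2 := charP_of_card_eq_prime_pow (f := h * 2) (by rw [hF, hq, pow_mul])
  have hgen := zeros_count_q_even_general hq hF R fun e he ↦ ⟨(hR e he).1, by
    rw [frobTrace, (hR e he).2]; exact one_ne_zero⟩
  simpa [frobTrace, sum_range_succ, CharTwo.sub_eq_add, hRcard, add_comm _ (_ ^ q)] using hgen
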